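/- Let P be an n×m matrix with nonnegative real entries summing to 1, let λ_1,…,λ_r be positive reals, and suppose P admits a diagonal form of PSD factorization with respect to Λ = diag(√λ_1,…,√λ_r), i.e., there exist r×r positive semidefinite complex matrices C_1,…,C_n and D_1,…,D_m with tr(C_x D_y) = P(x,y) for all x,y and ∑_{x=1}^n C_x = ∑_{y=1}^m D_y = Λ. Then the mutual information of P satisfies I(P) ≤ −∑_{i=1}^r λ_i·log(λ_i), where I(P) = ∑_{x,y : P(x,y)>0} P(x,y)·log( P(x,y) / ( (∑_j P(x,j))·(∑_i P(i,y)) ) ). -/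

import Mathlib

open Matrix
open scoped ComplexOrder

namespace Matrix

variable {ι κ : Type*} [Fintype ι] [DecidableEq ι] [Fintype κ]

open scoped MatrixOrder in
lemma PosSemidef.exists_eq_conjTranspose_mul_self {A : Matrix ι ι ℂ} (hA : A.PosSemidef) :
    ∃ B : Matrix ι ι ℂ, A = Bᴴ * B :=
  CStarAlgebra.nonneg_iff_eq_star_mul_self.mp hA.nonneg

lemma PosSemidef.re_trace_mul_nonneg {A B : Matrix ι ι ℂ} (hA : A.PosSemidef)
    (hB : B.PosSemidef) : 0 ≤ (A * B).trace.re := by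
  obtain ⟨S, rfl⟩ := hA.exists_eq_conjTranspose_mul_self
  have h := (hB.mul_mul_conjTranspose_same S).trace_nonneg
  rw [mul_assoc, trace_mul_comm]
  exact (Complex.le_def.mp h).1

open scoped Matrix.Norms.Frobenius in
lemma re_trace_conjTranspose_mul_self (A : Matrix ι ι ℂ) : (Aᴴ * A).trace.re = ‖A‖ ^ 2 := by
  rw [frobenius_norm_def, ← Real.sqrt_eq_rpow, Real.sq_sqrt (by positivity), Finset.sum_comm]
  simp [trace, mul_apply, Complex.sq_norm, Complex.normSq_apply]

open scoped Matrix.Norms.Frobenius in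
lemma PosSemidef.re_trace_mul_le {A B : Matrix ι ι ℂ} (hA : A.PosSemidef)
    (hB : B.PosSemidef) : (A * B).trace.re ≤ A.trace.re * B.trace.re := by
  obtain ⟨S, rfl⟩ := hA.exists_eq_conjTranspose_mul_self
  obtain ⟨U, rfl⟩ := hB.exists_eq_conjTranspose_mul_self
  have h : (Sᴴ * S * (Uᴴ * U)).trace = ((S * Uᴴ)ᴴ * (S * Uᴴ)).trace := by
    rw [conjTranspose_mul, conjTranspose_conjTranspose, ← mul_assoc, trace_mul_comm]
    simp only [mul_assoc]
  rw [h]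
  simp only [re_trace_conjTranspose_mul_self]
  rw [← mul_pow, ← frobenius_norm_conjTranspose U]
  gcongr
  exact frobenius_norm_mul S Uᴴ

/-- Kadison's inequality for the map `c ↦ ∑ y, c y • E y` attached to a resolution of the
identity. -/
lemma posSemidef_sum_sq_smul_sub (E : κ → Matrix ι ι ℂ) (hE : ∀ y, (E y).PosSemidef)
    (hE1 : ∑ y, E y = 1) (c : κ → ℝ) :
    (∑ y, (c y ^ 2) • E y - (∑ y, c y • E y) * (∑ y, c y • E y)).PosSemidef := by
  set X := ∑ y, c y • E y with hX
  have hXh : Xᴴ = X := by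
    simp only [hX, conjTranspose_sum, conjTranspose_smul, (hE _).1.eq, star_trivial]
  have h : ∑ y, (c y ^ 2) • E y - X * X
      = ∑ y, (c y • (1 : Matrix ι ι ℂ) - X) * E y * (c y • (1 : Matrix ι ι ℂ) - X)ᴴ := by
    have : ∀ y, (c y • (1 : Matrix ι ι ℂ) - X) * E y * (c y • (1 : Matrix ι ι ℂ) - X)ᴴ
        = (c y ^ 2) • E y - (c y • E y) * X - X * (c y • E y) + X * E y * X := by
      intro y
      simp only [conjTranspose_sub, conjTranspose_smul, conjTranspose_one, hXh, star_trivial,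
        sub_mul, mul_sub, smul_mul_assoc, mul_smul_comm, one_mul, mul_one, smul_smul, sq,
        smul_sub]
      abel
    simp only [this, Finset.sum_add_distrib, Finset.sum_sub_distrib, ← Finset.sum_mul,
      ← Finset.mul_sum, hE1, mul_one, ← hX]
    abel
  rw [h]
  exact posSemidef_sum _ fun y _ => (hE y).mul_mul_conjTranspose_same _

/-- Variational form of the monotonicity under measurements of the quadratic resolvent divergence
between `T` and `diagonal l`. -/
lemma PosSemidef.two_mul_sum_le_resolvent {T : Matrix ι ι ℂ} (hT : T.PosSemidef)
    {E : κ → Matrix ι ι ℂ} (hE : ∀ y, (E y).PosSemidef) (hE1 : ∑ y, E y = 1)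
    {l : ι → ℝ} (hl : ∀ i, 0 < l i) {t : ℝ} (ht : 0 ≤ t) (c : κ → ℝ) :
    2 * ∑ y, c y * (T * E y).trace.re ≤
      ∑ i, (T i i).re / (t + l i) + ∑ y, c y ^ 2 * (t * (T * E y).trace.re
        + T.trace.re * (diagonal (fun i => (l i : ℂ)) * E y).trace.re) := by
  set X := ∑ y, c y • E y with hX
  set Y := ∑ y, (c y ^ 2) • E y with hY
  set R : Matrix ι ι ℂ := diagonal (fun i => (l i : ℂ)) with hR
  set N : Matrix ι ι ℂ := diagonal (fun i => (((t + l i)⁻¹ : ℝ) : ℂ)) with hN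
  have hpos : ∀ i, 0 < t + l i := fun i => by linarith [hl i]
  have hXh : Xᴴ = X := by
    simp only [hX, conjTranspose_sum, conjTranspose_smul, (hE _).1.eq, star_trivial]
  have hRp : R.PosSemidef := PosSemidef.diagonal fun i => by simpa using (hl i).le
  have hNh : Nᴴ = N := by
    simp only [hN, diagonal_conjTranspose]
    congr 1
    ext i
    simp
  have hM : t • (1 : Matrix ι ι ℂ) + R = diagonal (fun i => ((t + l i : ℝ) : ℂ)) := by
    rw [hR, ← diagonal_one, ← diagonal_smul, diagonal_add]
    congr 1
    ext i
    simp
  have hne : ∀ i, ((t + l i : ℝ) : ℂ) ≠ 0 := fun i => by exact_mod_cast (hpos i).ne'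
  have hNM : N * (t • (1 : Matrix ι ι ℂ) + R) = 1 := by
    rw [hM, hN, diagonal_mul_diagonal, ← diagonal_one]
    congr 1
    ext i
    rw [Complex.ofReal_inv, inv_mul_cancel₀ (hne i)]
  have hMN : (t • (1 : Matrix ι ι ℂ) + R) * N = 1 := by
    rw [hM, hN, diagonal_mul_diagonal, ← diagonal_one]
    congr 1
    ext i
    rw [Complex.ofReal_inv, mul_inv_cancel₀ (hne i)]
  have hMp : (t • (1 : Matrix ι ι ℂ) + R).PosSemidef := (PosSemidef.one.smul ht).add hRp
  have hXRX : (X * R * X).PosSemidef := by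
    simpa only [hXh] using hRp.mul_mul_conjTranspose_same X
  have hkad := posSemidef_sum_sq_smul_sub E hE hE1 c
  rw [← hX, ← hY] at hkad
  have h0 := hT.re_trace_mul_nonneg (hMp.mul_mul_conjTranspose_same (N - X))
  have hexp : (N - X) * (t • (1 : Matrix ι ι ℂ) + R) * (N - X)ᴴ
      = N - X - X + (t • (X * X) + X * R * X) := by
    rw [conjTranspose_sub, hNh, hXh, sub_mul, hNM, sub_mul, mul_sub, mul_sub, mul_assoc X _ N, hMN]
    simp only [mul_add, add_mul, mul_smul_comm, smul_mul_assoc, mul_one, one_mul]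
    abel
  rw [hexp] at h0
  have h1 := hT.re_trace_mul_nonneg hkad
  have h2 := hT.re_trace_mul_le hXRX
  have h3 := hRp.re_trace_mul_nonneg hkad
  have hcyc : (X * R * X).trace = (R * (X * X)).trace := by
    rw [mul_assoc, trace_mul_comm, mul_assoc]
  have hTp : 0 ≤ T.trace.re := (Complex.le_def.mp hT.trace_nonneg).1
  rw [hcyc] at h2
  simp only [mul_add, mul_sub, mul_smul_comm, trace_add, trace_sub, trace_smul, Complex.add_re,
    Complex.sub_re, Complex.smul_re, smul_eq_mul] at h0 h1 h3
  have hTN : (T * N).trace.re = ∑ i, (T i i).re / (t + l i) := by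
    simp [trace, hN, mul_diagonal, div_eq_mul_inv, -Complex.ofReal_add, -Complex.ofReal_inv]
  have hTX : (T * X).trace.re = ∑ y, c y * (T * E y).trace.re := by
    simp only [hX, Finset.mul_sum, mul_smul_comm, trace_sum, trace_smul, Complex.re_sum,
      Complex.smul_re, smul_eq_mul]
  have hAY : ∀ A : Matrix ι ι ℂ, (A * Y).trace.re = ∑ y, c y ^ 2 * (A * E y).trace.re := by
    intro A
    simp only [hY, Finset.mul_sum, mul_smul_comm, trace_sum, trace_smul, Complex.re_sum,
      Complex.smul_re, smul_eq_mul]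
  have hsum : ∑ y, c y ^ 2 * (t * (T * E y).trace.re + T.trace.re * (R * E y).trace.re)
      = t * (T * Y).trace.re + T.trace.re * (R * Y).trace.re := by
    rw [hAY, hAY, Finset.mul_sum, Finset.mul_sum, ← Finset.sum_add_distrib]
    exact Finset.sum_congr rfl fun y _ => by ring
  rw [hsum, ← hTN, ← hTX]
  have h4 := mul_le_mul_of_nonneg_left (sub_nonneg.mp h1) ht
  have h5 := mul_le_mul_of_nonneg_left (sub_nonneg.mp h3) hTp
  linarith

lemma PosSemidef.sum_sq_div_le_resolvent {T : Matrix ι ι ℂ} (hT : T.PosSemidef)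
    {E : κ → Matrix ι ι ℂ} (hE : ∀ y, (E y).PosSemidef) (hE1 : ∑ y, E y = 1)
    {l : ι → ℝ} (hl : ∀ i, 0 < l i) {t : ℝ} (ht : 0 ≤ t) :
    ∑ y, (T * E y).trace.re ^ 2 / (t * (T * E y).trace.re
        + T.trace.re * (diagonal (fun i => (l i : ℂ)) * E y).trace.re) ≤
      ∑ i, (T i i).re / (t + l i) := by
  set d : κ → ℝ := fun y => t * (T * E y).trace.re
    + T.trace.re * (diagonal (fun i => (l i : ℂ)) * E y).trace.re with hd
  have h := hT.two_mul_sum_le_resolvent hE hE1 hl ht fun y => (T * E y).trace.re / d y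
  have h1 : ∀ y, (T * E y).trace.re / d y * (T * E y).trace.re = (T * E y).trace.re ^ 2 / d y :=
    fun y => by ring
  have h2 : ∀ y, ((T * E y).trace.re / d y) ^ 2 * d y = (T * E y).trace.re ^ 2 / d y := by
    intro y
    by_cases hy : d y = 0
    · simp [hy]
    · field_simp
  change _ ≤ _ + ∑ y, ((T * E y).trace.re / d y) ^ 2 * d y at h
  simp only [h1, h2] at h
  linarith

end Matrix

/-- A family of resolvent inequalities integrates to an inequality between a relative entropy and
an entropy. -/
lemma sum_mul_log_div_le_of_resolvent_le {α β : Type*} [Fintype α] [Fintype β]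
    {a b : α → ℝ} {l : β → ℝ} (ha : ∀ i, 0 ≤ a i)
    (hab : ∀ i, 0 < a i → 0 < b i) (hl : ∀ j, 0 < l j) (ha1 : ∑ i, a i = 1) (hl1 : ∑ j, l j = 1)
    (h : ∀ t, 0 < t → ∑ i, a i ^ 2 / (t * a i + b i) ≤ ∑ j, l j / (t + l j)) :
    ∑ i, a i * Real.log (a i / b i) ≤ -∑ j, l j * Real.log (l j) := by
  set G : ℝ → ℝ := fun t =>
    ∑ j, l j * Real.log (t + l j) - ∑ i, a i * Real.log (t * a i + b i) with hG
  have hderiv : ∀ t, 0 ≤ t → HasDerivAt G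
      (∑ j, l j / (t + l j) - ∑ i, a i ^ 2 / (t * a i + b i)) t := by
    intro t ht
    refine HasDerivAt.sub (HasDerivAt.fun_sum fun j _ => ?_) (HasDerivAt.fun_sum fun i _ => ?_)
    · have hne : t + l j ≠ 0 := (add_pos_of_nonneg_of_pos ht (hl j)).ne'
      have := (((hasDerivAt_id t).add_const (l j)).log hne).const_mul (l j)
      refine this.congr_deriv ?_
      simp [div_eq_mul_inv]
    · rcases (ha i).eq_or_lt with h0 | h0
      · simpa [← h0] using hasDerivAt_const t (0 : ℝ)
      · have hne : t * a i + b i ≠ 0 := by have := hab i h0; positivity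
        have := ((((hasDerivAt_id t).mul_const (a i)).add_const (b i)).log hne).const_mul (a i)
        refine this.congr_deriv ?_
        simp only [id, one_mul]
        ring
  have hmono : MonotoneOn G (Set.Ici 0) := by
    refine monotoneOn_of_deriv_nonneg (convex_Ici 0)
      (fun t ht => (hderiv t ht).continuousAt.continuousWithinAt) ?_ ?_
    · intro t ht
      rw [interior_Ici] at ht
      exact (hderiv t (le_of_lt ht)).differentiableAt.differentiableWithinAt
    · intro t ht
      rw [interior_Ici] at ht
      rw [(hderiv t (le_of_lt ht)).deriv]
      exact sub_nonneg.mpr (h t ht)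
  have hu : ∀ u ∈ Set.Ioi (0 : ℝ),
      ∑ i, a i * Real.log (a i / b i) ≤ ∑ j, l j * Real.log (u + (l j)⁻¹) := by
    intro u hu
    have hu : 0 < u := hu
    have hle := hmono (Set.mem_Ici.mpr le_rfl) (Set.mem_Ici.mpr (inv_nonneg.mpr hu.le))
      (inv_nonneg.mpr hu.le)
    simp only [hG, zero_add, zero_mul] at hle
    have h1 : ∑ i, a i * Real.log (a i / b i) ≤
        ∑ i, a i * Real.log (u⁻¹ * a i + b i) - ∑ i, a i * Real.log (b i)
          + Real.log u * ∑ i, a i := by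
      rw [Finset.mul_sum, ← Finset.sum_sub_distrib, ← Finset.sum_add_distrib]
      refine Finset.sum_le_sum fun i _ => ?_
      rcases (ha i).eq_or_lt with h0 | h0
      · simp [← h0]
      · have hbi := hab i h0
        have h2 : Real.log (u⁻¹ * a i) ≤ Real.log (u⁻¹ * a i + b i) :=
          Real.log_le_log (by positivity) (by linarith)
        rw [Real.log_mul (by positivity) h0.ne', Real.log_inv] at h2
        rw [Real.log_div h0.ne' hbi.ne']
        nlinarith
    have h3 : ∑ j, l j * Real.log (u + (l j)⁻¹) =
        ∑ j, l j * Real.log (u⁻¹ + l j) - ∑ j, l j * Real.log (l j) + Real.log u * ∑ j, l j := by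
      rw [Finset.mul_sum, ← Finset.sum_sub_distrib, ← Finset.sum_add_distrib]
      refine Finset.sum_congr rfl fun j _ => ?_
      have hj := hl j
      have h4 : u + (l j)⁻¹ = u * (u⁻¹ + l j) / l j := by field_simp; ring
      rw [h4, Real.log_div (by positivity) hj.ne', Real.log_mul hu.ne' (by positivity)]
      ring
    rw [h3]
    rw [ha1] at h1
    rw [hl1]
    linarith
  have hcont : Filter.Tendsto (fun u : ℝ => ∑ j, l j * Real.log (u + (l j)⁻¹))
      (nhdsWithin 0 (Set.Ioi 0)) (nhds (-∑ j, l j * Real.log (l j))) := by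
    refine Filter.Tendsto.mono_left ?_ nhdsWithin_le_nhds
    have hc : ContinuousAt (fun u : ℝ => ∑ j, l j * Real.log (u + (l j)⁻¹)) 0 := by
      refine tendsto_finsetSum _ fun j _ => ?_
      have hne : (0 : ℝ) + (l j)⁻¹ ≠ 0 := by simpa using (hl j).ne'
      exact (((continuousAt_id.add continuousAt_const).log hne).const_mul (l j))
    simpa [ContinuousAt] using hc
  exact ge_of_tendsto hcont (Filter.eventually_of_mem self_mem_nhdsWithin hu)


/-- If `P` (a probability matrix) admits a diagonal form of PSD factorization
with respect to `Λ = diagonal (√λ₁, …, √λᵣ)`, then the mutual information of `P` is at most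
the entropy `−∑ᵢ λᵢ log λᵢ`. -/
theorem mutual_information_le_entropy_of_schmidt_coefficients
    (n m r : ℕ) (P : Matrix (Fin n) (Fin m) ℝ)
    (hP : ∀ x y, 0 ≤ P x y) (hPsum : ∑ x, ∑ y, P x y = 1)
    (l : Fin r → ℝ) (hl : ∀ i, 0 < l i)
    (C : Fin n → Matrix (Fin r) (Fin r) ℂ) (D : Fin m → Matrix (Fin r) (Fin r) ℂ)
    (hC : ∀ x, (C x).PosSemidef) (hD : ∀ y, (D y).PosSemidef)
    (htr : ∀ x y, (C x * D y).trace = (P x y : ℂ))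
    (hCsum : (∑ x, C x) = Matrix.diagonal (fun i => (Real.sqrt (l i) : ℂ)))
    (hDsum : (∑ y, D y) = Matrix.diagonal (fun i => (Real.sqrt (l i) : ℂ))) :
    (∑ x, ∑ y, if 0 < P x y then
        P x y * Real.log (P x y / ((∑ j, P x j) * (∑ i, P i y))) else 0)
      ≤ -∑ i, l i * Real.log (l i) := by
  set k : Fin r → ℂ := fun i => (Real.sqrt (Real.sqrt (l i)) : ℂ) with hk
  have hk0 : ∀ i, k i ≠ 0 := fun i => by
    simpa [hk] using (Real.sqrt_pos.mpr (Real.sqrt_pos.mpr (hl i))).ne'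
  have hkk : ∀ i, k i * k i = (Real.sqrt (l i) : ℂ) := fun i => by
    rw [hk, ← Complex.ofReal_mul, Real.mul_self_sqrt (Real.sqrt_nonneg _)]
  have hss : ∀ i, (Real.sqrt (l i) : ℂ) * (Real.sqrt (l i) : ℂ) = (l i : ℂ) := fun i => by
    rw [← Complex.ofReal_mul, Real.mul_self_sqrt (hl i).le]
  set K : Matrix (Fin r) (Fin r) ℂ := diagonal k with hK
  set J : Matrix (Fin r) (Fin r) ℂ := diagonal fun i => (k i)⁻¹ with hJ
  have hKh : Kᴴ = K := by
    rw [hK, diagonal_conjTranspose]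
    congr 1
    ext i
    simp [hk]
  have hJh : Jᴴ = J := by
    rw [hJ, diagonal_conjTranspose]
    congr 1
    ext i
    simp [hk]
  have hKJ : K * J = 1 := by simp [hK, hJ, hk0]
  have hJK : J * K = 1 := by simp [hK, hJ, hk0]
  set T : Fin n → Matrix (Fin r) (Fin r) ℂ := fun x => K * C x * K with hT
  set E : Fin m → Matrix (Fin r) (Fin r) ℂ := fun y => J * D y * J with hE
  have hTpos : ∀ x, (T x).PosSemidef := fun x => by
    simpa only [hKh] using (hC x).mul_mul_conjTranspose_same K
  have hEpos : ∀ y, (E y).PosSemidef := fun y => by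
    simpa only [hJh] using (hD y).mul_mul_conjTranspose_same J
  have hTsum : ∑ x, T x = diagonal fun i => (l i : ℂ) := by
    simp only [hT, ← Finset.sum_mul, ← Finset.mul_sum, hCsum, hK, diagonal_mul_diagonal]
    congr 1
    ext i
    rw [mul_right_comm, hkk, hss]
  have hEsum : ∑ y, E y = 1 := by
    simp only [hE, ← Finset.sum_mul, ← Finset.mul_sum, hDsum, hJ, diagonal_mul_diagonal,
      ← hkk, ← diagonal_one]
    congr 1
    ext i
    have := hk0 i
    field_simp
  have hTE : ∀ x y, (T x * E y).trace.re = P x y := by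
    intro x y
    have h : T x * E y = K * (C x * D y) * J := by
      calc T x * E y = K * C x * (K * J) * D y * J := by simp only [hT, hE, mul_assoc]
        _ = _ := by rw [hKJ, mul_one]; simp only [mul_assoc]
    rw [h, trace_mul_comm, ← mul_assoc, hJK, one_mul, htr, Complex.ofReal_re]
  have hTtr : ∀ x, (T x).trace.re = ∑ j, P x j := by
    intro x
    simp only [← hTE, ← Complex.re_sum, ← trace_sum, ← Finset.mul_sum, hEsum, mul_one]
  have hEtr : ∀ y, (diagonal (fun i => (l i : ℂ)) * E y).trace.re = ∑ i, P i y := by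
    intro y
    simp only [← hTE, ← Complex.re_sum, ← trace_sum, ← Finset.sum_mul, hTsum]
  have hTdiag : ∀ i, ∑ x, (T x i i).re = l i := by
    intro i
    rw [← Complex.re_sum, ← Matrix.sum_apply, hTsum, diagonal_apply_eq, Complex.ofReal_re]
  have hl1 : ∑ i, l i = 1 := by
    rw [← hPsum]
    simp only [← hTtr, ← hTdiag, trace, diag, Complex.re_sum]
    exact Finset.sum_comm
  have hres : ∀ t, 0 < t → ∑ z : Fin n × Fin m,
      P z.1 z.2 ^ 2 / (t * P z.1 z.2 + (∑ j, P z.1 j) * (∑ i, P i z.2)) ≤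
        ∑ i, l i / (t + l i) := by
    intro t ht
    rw [Fintype.sum_prod_type]
    calc _ ≤ ∑ x, ∑ i, (T x i i).re / (t + l i) := by
          refine Finset.sum_le_sum fun x _ => ?_
          simpa only [hTE, hTtr, hEtr] using
            (hTpos x).sum_sq_div_le_resolvent hEpos hEsum hl ht.le
      _ = _ := by
          rw [Finset.sum_comm]
          simp only [← Finset.sum_div, hTdiag]
  have key := sum_mul_log_div_le_of_resolvent_le
    (a := fun z : Fin n × Fin m => P z.1 z.2)
    (b := fun z : Fin n × Fin m => (∑ j, P z.1 j) * (∑ i, P i z.2))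
    (fun z => hP z.1 z.2)
    (fun z hz => mul_pos
      (hz.trans_le (Finset.single_le_sum (f := fun j => P z.1 j) (fun j _ => hP z.1 j)
        (Finset.mem_univ z.2)))
      (hz.trans_le (Finset.single_le_sum (f := fun i => P i z.2) (fun i _ => hP i z.2)
        (Finset.mem_univ z.1))))
    hl (by rw [Fintype.sum_prod_type, hPsum]) hl1 hres
  rw [Fintype.sum_prod_type] at key
  refine le_trans (le_of_eq ?_) key
  refine Finset.sum_congr rfl fun x _ => Finset.sum_congr rfl fun y _ => ?_
  split_ifs with h
  · rfl
  · simp [le_antisymm (not_lt.mp h) (hP x y)]
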